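/- Let f ∈ ℤ[x] with deg(f) ≥ 3, or deg(f) = 2 with leading coefficient at least 2 (positive leading coefficient in all cases). Then there exist positive integers n₀, a, b such that f(n₀) = (n₀ + a)(n₀ + b). -/

import Mathlib

/-!
Fix a large `a`, put `D = |f(-a)|` and `n = D - a`. Since `n ≡ -a` modulo `D`, the number
`D = n + a` divides `f(n)`, say `f(n) = (n + a) * q`, and it remains to see that `q > n`, that is
`f(n) > n² + n * a`. As `f` has degree at least `2`, the ratio `n / a` exceeds any prescribed
constant `k` once `a` is large; for suitable `k` the growth of `f` gives `f(n) > (1 + 1 / k) * n²`,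
and `n² / k > n * a`.
-/

open Filter Polynomial

section CommRing

variable {R : Type*} [CommRing R]

theorem dvd_eval_add_of_dvd_eval {f : R[X]} {d x : R} (h : d ∣ f.eval x) :
    d ∣ f.eval (x + d) := by
  have hsub : d ∣ f.eval (x + d) - f.eval x := by
    simpa only [add_sub_cancel_left] using sub_dvd_eval_sub (x + d) x f
  exact (dvd_sub_left h).mp hsub

end CommRing

section LinearOrder

variable {R : Type*} [CommRing R] [LinearOrder R] [IsStrictOrderedRing R]

theorem exists_pos_eq_mul_add_of_dvd {d n y : R} (hd : 0 ≤ d) (hdvd : d ∣ y) (hlt : d * n < y) :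
    ∃ b, 0 < b ∧ y = d * (n + b) := by
  obtain ⟨q, rfl⟩ := hdvd
  have hnq : n < q := lt_of_mul_lt_mul_left hlt hd
  exact ⟨q - n, sub_pos.mpr hnq, by rw [add_sub_cancel]⟩

theorem add_mul_lt_of_succ_mul_sq_lt {k n a y : R} (hk : 0 ≤ k) (hn : 0 < n) (ha : k * a < n)
    (hy : (k + 1) * n ^ 2 < k * y) : (n + a) * n < y := by
  refine lt_of_mul_lt_mul_left ?_ hk
  calc k * ((n + a) * n) = k * n ^ 2 + k * a * n := by ring
    _ < k * n ^ 2 + n * n := by gcongr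
    _ = (k + 1) * n ^ 2 := by ring
    _ < k * y := hy

end LinearOrder

section Archimedean

variable {R : Type*} [CommRing R] [LinearOrder R] [IsStrictOrderedRing R] [Archimedean R]

theorem tendsto_eval_atTop_of_leadingCoeff_pos {P : R[X]} (hdeg : 0 < P.degree)
    (hlead : 0 < P.leadingCoeff) : Tendsto (fun x => P.eval x) atTop atTop := by
  refine degree_pos_induction_on (P := fun p => 0 < p.leadingCoeff →
    Tendsto (fun x => p.eval x) atTop atTop) P hdeg ?_ ?_ ?_ hlead
  · intro a _ ha
    rw [leadingCoeff_C_mul_X] at ha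
    simpa only [eval_C_mul, eval_X, id] using tendsto_id.const_mul_atTop' ha
  · intro p _ ih hp
    rw [leadingCoeff_mul_X] at hp
    simpa only [eval_mul_X, id] using (ih hp).atTop_mul_atTop₀ tendsto_id
  · intro p a hpos ih hp
    rw [leadingCoeff_add_of_degree_lt' (degree_C_le.trans_lt hpos)] at hp
    simpa only [eval_add, eval_C] using tendsto_atTop_add_const_right _ _ (ih hp)

theorem eventually_eval_lt_eval_of_coeff_lt {P Q : R[X]} {d : ℕ} (hd : 0 < d)
    (hP : P.natDegree ≤ d) (hQ : Q.natDegree ≤ d) (hcoeff : Q.coeff d < P.coeff d) :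
    ∀ᶠ x in atTop, Q.eval x < P.eval x := by
  have hcoeff_pos : 0 < (P - Q).coeff d := by rwa [coeff_sub, sub_pos]
  have hdeg : (P - Q).natDegree = d :=
    natDegree_eq_of_le_of_coeff_ne_zero (natDegree_sub_le_of_le hP hQ |>.trans_eq (max_self d))
      hcoeff_pos.ne'
  have htendsto : Tendsto (fun x => (P - Q).eval x) atTop atTop := by
    apply tendsto_eval_atTop_of_leadingCoeff_pos
    · rwa [← natDegree_pos_iff_degree_pos, hdeg]
    · rwa [leadingCoeff, hdeg]
  filter_upwards [htendsto.eventually_gt_atTop 0] with x hx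
  rwa [eval_sub, sub_pos] at hx

theorem exists_eventually_succ_mul_eval_lt_mul_eval {P Q : R[X]} {d : ℕ} (hd : 0 < d)
    (hP : P.natDegree ≤ d) (hQ : Q.natDegree ≤ d) (hcoeff : Q.coeff d < P.coeff d) :
    ∃ k : ℕ, ∀ᶠ x in atTop, ((k : R) + 1) * Q.eval x < k * P.eval x := by
  obtain ⟨k, hk⟩ := exists_lt_nsmul (sub_pos.mpr hcoeff) (Q.coeff d)
  refine ⟨k, ?_⟩
  have hscaled := eventually_eval_lt_eval_of_coeff_lt (P := C (k : R) * P)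
    (Q := C ((k : R) + 1) * Q) hd ((natDegree_C_mul_le _ _).trans hP)
    ((natDegree_C_mul_le _ _).trans hQ) (by
      rw [nsmul_eq_mul] at hk
      rw [coeff_C_mul, coeff_C_mul]
      linarith)
  simpa only [eval_C_mul] using hscaled

theorem eventually_eval_lt_abs_eval_of_natDegree_lt {P Q : R[X]}
    (h : Q.natDegree < P.natDegree) : ∀ᶠ x in atTop, Q.eval x < |P.eval x| := by
  have hd : 0 < P.natDegree := Nat.zero_lt_of_lt h
  have hQ : Q.coeff P.natDegree = 0 := coeff_eq_zero_of_natDegree_lt h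
  have hP : P.leadingCoeff ≠ 0 := leadingCoeff_ne_zero.mpr (ne_zero_of_natDegree_gt h)
  rcases hP.lt_or_gt with hneg | hpos
  · have hlt := eventually_eval_lt_eval_of_coeff_lt (P := -P) hd (natDegree_neg P).le h.le
      (by rwa [hQ, coeff_neg, neg_pos])
    filter_upwards [hlt] with x hx
    rw [eval_neg] at hx
    exact hx.trans_le (neg_le_abs _)
  · have hlt := eventually_eval_lt_eval_of_coeff_lt hd le_rfl h.le (by rwa [hQ])
    filter_upwards [hlt] with x hx
    exact hx.trans_le (le_abs_self _)

theorem eventually_mul_lt_abs_eval_neg {f : R[X]} (hf : 2 ≤ f.natDegree) (c : R) :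
    ∀ᶠ x in atTop, c * x < |f.eval (-x)| := by
  have hdeg : (C c * X).natDegree < (f.comp (-X)).natDegree := by
    rw [natDegree_comp, natDegree_neg, natDegree_X, mul_one]
    exact ((natDegree_C_mul_le c X).trans natDegree_X_le).trans_lt hf
  simpa only [eval_C_mul, eval_X, eval_comp, eval_neg] using
    eventually_eval_lt_abs_eval_of_natDegree_lt hdeg

theorem schildkraut_factorization_general (f : R[X])
    (h : (3 ≤ f.natDegree ∧ 0 < f.leadingCoeff) ∨ (f.natDegree = 2 ∧ 1 < f.leadingCoeff)) :
    ∀ᶠ a in atTop, ∃ n b : R, 0 < n ∧ 0 < b ∧ f.eval n = (n + a) * (n + b) := by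
  have hdeg : 2 ≤ f.natDegree := by omega
  have hcoeff : (X ^ 2 : R[X]).coeff f.natDegree < f.coeff f.natDegree := by
    rw [coeff_X_pow, coeff_natDegree]
    rcases h with ⟨hd, hlead⟩ | ⟨hd, hlead⟩
    · rwa [if_neg (by omega)]
    · rwa [if_pos hd]
  obtain ⟨k, hk⟩ := exists_eventually_succ_mul_eval_lt_mul_eval (by omega) le_rfl
    ((natDegree_X_pow 2).trans_le hdeg) hcoeff
  obtain ⟨N, hN⟩ := eventually_atTop.mp hk
  filter_upwards [eventually_mul_lt_abs_eval_neg hdeg (k + 2), eventually_ge_atTop N,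
    eventually_gt_atTop 0] with a hlarge hNa ha
  have hdvd := dvd_eval_add_of_dvd_eval (abs_dvd_self (f.eval (-a)))
  set n := -a + |f.eval (-a)| with hn
  have hsum : |f.eval (-a)| = n + a := by rw [hn]; ring
  rw [hsum] at hdvd hlarge
  have hka : 0 ≤ k * a := by positivity
  have ha_lt : a < n := by linarith
  have hn_pos : 0 < n := ha.trans ha_lt
  have hgrowth : (k + 1) * n ^ 2 < k * f.eval n := by
    simpa only [eval_pow, eval_X] using hN n (hNa.trans ha_lt.le)
  have hlt : (n + a) * n < f.eval n :=
    add_mul_lt_of_succ_mul_sq_lt k.cast_nonneg hn_pos (by linarith) hgrowth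
  obtain ⟨b, hb, hfactor⟩ := exists_pos_eq_mul_add_of_dvd (by positivity) hdvd hlt
  exact ⟨n, b, hn_pos, hb, hfactor⟩

end Archimedean

theorem schildkraut_factorization (f : Polynomial ℤ)
    (h : (3 ≤ f.natDegree ∧ 0 < f.leadingCoeff) ∨
          (f.natDegree = 2 ∧ 2 ≤ f.leadingCoeff)) :
    ∃ n₀ a b : ℤ, 0 < n₀ ∧ 0 < a ∧ 0 < b ∧ f.eval n₀ = (n₀ + a) * (n₀ + b) := by
  obtain ⟨a, ⟨n, b, hn, hb, heval⟩, ha⟩ :=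
    ((schildkraut_factorization_general f h).and (eventually_gt_atTop 0)).exists
  exact ⟨n, a, b, hn, ha, hb, heval⟩
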